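/- arXiv:1306.5786 — 2 statements merged into one kernel-verified Lean document; each statement's English description precedes it below -/
import Mathlib

section
/- Let m be a positive integer, let Y be an invertible m×m real matrix, and let D₁ and D₂ be positive diagonal m×m matrices. Let (D̂_r, D̂_c) be a null minimizer for Y and let (D̃_r, D̃_c) be a null minimizer for Ỹ = D₁ Y D₂. Then log det(D̃_c ⊗ D̃_r) − m·log det(Ỹ Ỹᵗ / m) = log det(D̂_c ⊗ D̂_r) − m·log det(Y Yᵗ / m); that is, the likelihood ratio test statistic T satisfies T(D₁ Y D₂) = T(Y). -/
open Matrix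

/-- A positive diagonal matrix: a diagonal matrix with strictly positive diagonal entries. -/
def IsPosDiag {m : ℕ} (D : Matrix (Fin m) (Fin m) ℝ) : Prop :=
  D.IsDiag ∧ ∀ i, 0 < D i i

/-- The scaled log-likelihood of the mean-zero matrix normal model:
`l(Σr, Σc; Y) = tr(Σr⁻¹ Y Σc⁻¹ Yᵗ) + log det (Σc ⊗ Σr)`. -/
noncomputable def sll {m : ℕ} (Sr Sc Y : Matrix (Fin m) (Fin m) ℝ) : ℝ :=
  (Sr⁻¹ * Y * Sc⁻¹ * Yᵀ).trace + Real.log (Matrix.kroneckerMap (· * ·) Sc Sr).det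

/-- A null minimizer for `Y`: a pair of positive diagonal matrices minimizing
`l(D_r, D_c; Y)` over all pairs of positive diagonal matrices. -/
def IsNullMinimizer {m : ℕ} (Y Dr Dc : Matrix (Fin m) (Fin m) ℝ) : Prop :=
  IsPosDiag Dr ∧ IsPosDiag Dc ∧
    ∀ Dr' Dc' : Matrix (Fin m) (Fin m) ℝ, IsPosDiag Dr' → IsPosDiag Dc' →
      sll Dr Dc Y ≤ sll Dr' Dc' Y

/-! The null likelihood is equivariant: `Y ↦ A Y Bᵗ`, `D_r ↦ A D_r Aᵗ`, `D_c ↦ B D_c Bᵗ` changes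
`l` only by the constant `2m (log |det A| + log |det B|)`, and for invertible diagonal `A`, `B` it
preserves pairs of positive diagonal matrices, hence maps null minimizers to null minimizers.
Rescaling `D_r` shows that the trace term of `l` equals `m²` at every null minimizer, so
`log det (D̂_c ⊗ D̂_r)` depends on `Y` only. Both terms of `T` therefore shift by the same constant.
`Real.log` of a negative determinant is the logarithm of its absolute value. -/

open scoped Kronecker

section MatrixIdentities

variable {n p : Type*} [Fintype n] [DecidableEq n] [Fintype p] [DecidableEq p]

lemma mul_inv_mul_mul_inv_transpose_cancel {R : Type*} [CommRing R] {A : Matrix n n R}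
    (hA : IsUnit A.det) (S : Matrix n n R) : A * (A⁻¹ * S * A⁻¹ᵀ) * Aᵀ = S := by
  have hAt : IsUnit Aᵀ.det := by rwa [det_transpose]
  rw [transpose_nonsing_inv, Matrix.mul_assoc A⁻¹, mul_nonsing_inv_cancel_left _ _ hA,
    nonsing_inv_mul_cancel_right _ _ hAt]

lemma trace_inv_mul_mul_inv_mul_transpose_invariant {R : Type*} [CommRing R]
    {A : Matrix n n R} {B : Matrix p p R} (hA : IsUnit A.det) (hB : IsUnit B.det)
    (S : Matrix n n R) (T : Matrix p p R) (Y : Matrix n p R) :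
    ((A * S * Aᵀ)⁻¹ * (A * Y * Bᵀ) * (B * T * Bᵀ)⁻¹ * (A * Y * Bᵀ)ᵀ).trace
      = (S⁻¹ * Y * T⁻¹ * Yᵀ).trace := by
  have hAt : IsUnit Aᵀ.det := by rwa [det_transpose]
  have hBt : IsUnit Bᵀ.det := by rwa [det_transpose]
  have conj : (A * S * Aᵀ)⁻¹ * (A * Y * Bᵀ) * (B * T * Bᵀ)⁻¹ * (A * Y * Bᵀ)ᵀ
      = Aᵀ⁻¹ * (S⁻¹ * Y * T⁻¹ * Yᵀ * Aᵀ) := by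
    simp only [Matrix.mul_inv_rev, transpose_mul, transpose_transpose, Matrix.mul_assoc]
    rw [nonsing_inv_mul_cancel_left _ _ hA, mul_nonsing_inv_cancel_left _ _ hBt,
      nonsing_inv_mul_cancel_left _ _ hB]
  rw [conj, trace_mul_comm, mul_nonsing_inv_cancel_right _ _ hAt]

lemma log_det_mul {A B : Matrix n n ℝ} (hA : IsUnit A.det) (hB : IsUnit B.det) :
    Real.log (A * B).det = Real.log A.det + Real.log B.det := by
  rw [det_mul, Real.log_mul hA.ne_zero hB.ne_zero]

lemma log_det_smul {c : ℝ} {A : Matrix n n ℝ} (hc : c ≠ 0) (hA : IsUnit A.det) :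
    Real.log (c • A).det = Fintype.card n * Real.log c + Real.log A.det := by
  rw [det_smul, Real.log_mul (pow_ne_zero _ hc) hA.ne_zero, Real.log_pow]

lemma log_det_mul_mul_transpose {A S : Matrix n n ℝ} (hA : IsUnit A.det) (hS : IsUnit S.det) :
    Real.log (A * S * Aᵀ).det = Real.log S.det + 2 * Real.log A.det := by
  have hAS : IsUnit (A * S).det := by rw [det_mul]; exact hA.mul hS
  have hAt : IsUnit Aᵀ.det := by rwa [det_transpose]
  rw [log_det_mul hAS hAt, log_det_mul hA hS, det_transpose]
  ring

lemma isUnit_det_kronecker {R : Type*} [CommRing R] {A : Matrix n n R} {B : Matrix p p R}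
    (hA : IsUnit A.det) (hB : IsUnit B.det) : IsUnit (A ⊗ₖ B).det := by
  rw [det_kronecker]
  exact (hA.pow _).mul (hB.pow _)

lemma log_det_kronecker {A : Matrix n n ℝ} {B : Matrix p p ℝ}
    (hA : IsUnit A.det) (hB : IsUnit B.det) :
    Real.log (A ⊗ₖ B).det
      = Fintype.card p * Real.log A.det + Fintype.card n * Real.log B.det := by
  rw [det_kronecker, Real.log_mul (hA.pow _).ne_zero (hB.pow _).ne_zero, Real.log_pow,
    Real.log_pow]

lemma log_det_kronecker_mul_mul_transpose {A S : Matrix n n ℝ} {B T : Matrix p p ℝ}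
    (hA : IsUnit A.det) (hB : IsUnit B.det) (hS : IsUnit S.det) (hT : IsUnit T.det) :
    Real.log ((B * T * Bᵀ) ⊗ₖ (A * S * Aᵀ)).det
      = Real.log (T ⊗ₖ S).det
        + 2 * (Fintype.card n * Real.log B.det + Fintype.card p * Real.log A.det) := by
  have factor : (B * T * Bᵀ) ⊗ₖ (A * S * Aᵀ) = (B ⊗ₖ A) * (T ⊗ₖ S) * (B ⊗ₖ A)ᵀ := by
    rw [mul_kronecker_mul, mul_kronecker_mul, kroneckerMap_transpose]
  rw [factor, log_det_mul_mul_transpose (isUnit_det_kronecker hB hA) (isUnit_det_kronecker hT hS),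
    log_det_kronecker hB hA]

lemma log_det_smul_mul_transpose_self {c : ℝ} {X : Matrix n n ℝ} (hc : c ≠ 0)
    (hX : IsUnit X.det) :
    Real.log (c • (X * Xᵀ)).det = Fintype.card n * Real.log c + 2 * Real.log X.det := by
  have hXt : IsUnit Xᵀ.det := by rwa [det_transpose]
  have hXX : IsUnit (X * Xᵀ).det := by rw [det_mul]; exact hX.mul hXt
  rw [log_det_smul hc hXX, log_det_mul hX hXt, det_transpose, two_mul]

lemma isDiag_inv {R : Type*} [CommRing R] {A : Matrix n n R} (hA : A.IsDiag) : A⁻¹.IsDiag := by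
  rw [← hA.diagonal_diag, inv_diagonal]
  exact isDiag_diagonal _

end MatrixIdentities

lemma eq_of_forall_le_inv_mul_add_mul_log {a c : ℝ}
    (h : ∀ t : ℝ, 0 < t → a ≤ t⁻¹ * a + c * Real.log t) : a = c := by
  have hderiv : HasDerivAt (fun t : ℝ => t⁻¹ * a + c * Real.log t)
      (-((1 : ℝ) ^ 2)⁻¹ * a + c * (1 : ℝ)⁻¹) 1 :=
    ((hasDerivAt_inv one_ne_zero).mul_const a).add
      ((Real.hasDerivAt_log one_ne_zero).const_mul c)
  have hmin : IsLocalMin (fun t : ℝ => t⁻¹ * a + c * Real.log t) 1 := by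
    filter_upwards [lt_mem_nhds zero_lt_one] with t ht
    simpa using h t ht
  have hzero := hmin.hasDerivAt_eq_zero hderiv
  norm_num at hzero
  linarith

namespace IsPosDiag

variable {m : ℕ} {D : Matrix (Fin m) (Fin m) ℝ}

lemma isUnit_det (hD : IsPosDiag D) : IsUnit D.det := by
  rw [← hD.1.diagonal_diag, det_diagonal]
  exact (Finset.prod_pos fun i _ => hD.2 i).ne'.isUnit

lemma smul (hD : IsPosDiag D) {t : ℝ} (ht : 0 < t) : IsPosDiag (t • D) :=
  ⟨hD.1.smul t, fun i => mul_pos ht (hD.2 i)⟩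

lemma mul_mul_transpose (hD : IsPosDiag D) {A : Matrix (Fin m) (Fin m) ℝ} (hA : A.IsDiag)
    (hAu : IsUnit A.det) : IsPosDiag (A * D * Aᵀ) := by
  obtain ⟨a, rfl⟩ : ∃ a, A = diagonal a := ⟨_, hA.diagonal_diag.symm⟩
  obtain ⟨d, rfl⟩ : ∃ d, D = diagonal d := ⟨_, hD.1.diagonal_diag.symm⟩
  have ha : ∀ i, a i ≠ 0 := by
    simpa [Finset.prod_eq_zero_iff] using hAu
  have hd : ∀ i, 0 < d i := fun i => by simpa using hD.2 i
  rw [diagonal_transpose, diagonal_mul_diagonal, diagonal_mul_diagonal]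
  refine ⟨isDiag_diagonal _, fun i => ?_⟩
  rw [diagonal_apply_eq, mul_right_comm]
  exact mul_pos (mul_self_pos.2 (ha i)) (hd i)

end IsPosDiag

section Likelihood

variable {m : ℕ} {A B Sr Sc : Matrix (Fin m) (Fin m) ℝ}

lemma sll_smul_left {t : ℝ} (ht : t ≠ 0) (hSr : IsUnit Sr.det) (hSc : IsUnit Sc.det)
    (Y : Matrix (Fin m) (Fin m) ℝ) :
    sll (t • Sr) Sc Y = t⁻¹ * (Sr⁻¹ * Y * Sc⁻¹ * Yᵀ).trace
      + (m * m * Real.log t + Real.log (Sc ⊗ₖ Sr).det) := by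
  have hinv : (t • Sr)⁻¹ = t⁻¹ • Sr⁻¹ := Matrix.inv_smul' Sr (Units.mk0 t ht) hSr
  rw [sll, hinv, kronecker_smul, log_det_smul ht (isUnit_det_kronecker hSc hSr)]
  simp only [smul_mul, trace_smul, smul_eq_mul, Fintype.card_prod, Fintype.card_fin,
    Nat.cast_mul]

lemma sll_mul_mul_transpose (hA : IsUnit A.det) (hB : IsUnit B.det) (hSr : IsUnit Sr.det)
    (hSc : IsUnit Sc.det) (Y : Matrix (Fin m) (Fin m) ℝ) :
    sll (A * Sr * Aᵀ) (B * Sc * Bᵀ) (A * Y * Bᵀ)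
      = sll Sr Sc Y + 2 * (m * Real.log B.det + m * Real.log A.det) := by
  rw [sll, sll, trace_inv_mul_mul_inv_mul_transpose_invariant hA hB,
    log_det_kronecker_mul_mul_transpose hA hB hSr hSc, Fintype.card_fin, add_assoc]

end Likelihood

namespace IsNullMinimizer

variable {m : ℕ} {Y Dr Dc : Matrix (Fin m) (Fin m) ℝ}

lemma trace_eq (h : IsNullMinimizer Y Dr Dc) : (Dr⁻¹ * Y * Dc⁻¹ * Yᵀ).trace = m * m := by
  obtain ⟨hr, hc, hmin⟩ := h
  refine eq_of_forall_le_inv_mul_add_mul_log fun t ht => ?_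
  have hle := hmin (t • Dr) Dc (hr.smul ht) hc
  rw [sll_smul_left ht.ne' hr.isUnit_det hc.isUnit_det, sll] at hle
  linarith

lemma log_det_kronecker_eq {Dr' Dc' : Matrix (Fin m) (Fin m) ℝ} (h : IsNullMinimizer Y Dr Dc)
    (h' : IsNullMinimizer Y Dr' Dc') :
    Real.log (Dc ⊗ₖ Dr).det = Real.log (Dc' ⊗ₖ Dr').det := by
  have hsll : sll Dr Dc Y = sll Dr' Dc' Y :=
    le_antisymm (h.2.2 _ _ h'.1 h'.2.1) (h'.2.2 _ _ h.1 h.2.1)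
  rwa [sll, sll, h.trace_eq, h'.trace_eq, add_right_inj] at hsll

lemma mul_mul_transpose {A B : Matrix (Fin m) (Fin m) ℝ} (h : IsNullMinimizer Y Dr Dc)
    (hA : A.IsDiag) (hB : B.IsDiag) (hAu : IsUnit A.det) (hBu : IsUnit B.det) :
    IsNullMinimizer (A * Y * Bᵀ) (A * Dr * Aᵀ) (B * Dc * Bᵀ) := by
  obtain ⟨hr, hc, hmin⟩ := h
  refine ⟨hr.mul_mul_transpose hA hAu, hc.mul_mul_transpose hB hBu, fun R C hR hC => ?_⟩
  have hR' := hR.mul_mul_transpose (isDiag_inv hA) (isUnit_nonsing_inv_det A hAu)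
  have hC' := hC.mul_mul_transpose (isDiag_inv hB) (isUnit_nonsing_inv_det B hBu)
  rw [← mul_inv_mul_mul_inv_transpose_cancel hAu R, ← mul_inv_mul_mul_inv_transpose_cancel hBu C,
    sll_mul_mul_transpose hAu hBu hr.isUnit_det hc.isUnit_det,
    sll_mul_mul_transpose hAu hBu hR'.isUnit_det hC'.isUnit_det]
  exact add_le_add_left (hmin _ _ hR' hC') _

end IsNullMinimizer

theorem lrt_statistic_diagonal_invariant_general
    {m : ℕ} (hm : 0 < m) {Y D₁ D₂ Dr Dc Dr' Dc' : Matrix (Fin m) (Fin m) ℝ}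
    (hY : IsUnit Y.det) (hD₁ : D₁.IsDiag) (hD₂ : D₂.IsDiag)
    (hD₁u : IsUnit D₁.det) (hD₂u : IsUnit D₂.det)
    (h : IsNullMinimizer Y Dr Dc)
    (h' : IsNullMinimizer (D₁ * Y * D₂) Dr' Dc') :
    Real.log (Dc' ⊗ₖ Dr').det
        - m * Real.log (((m : ℝ)⁻¹ • ((D₁ * Y * D₂) * (D₁ * Y * D₂)ᵀ)).det)
      = Real.log (Dc ⊗ₖ Dr).det - m * Real.log (((m : ℝ)⁻¹ • (Y * Yᵀ)).det) := by
  have hm' : (m : ℝ)⁻¹ ≠ 0 := inv_ne_zero (Nat.cast_ne_zero.2 hm.ne')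
  have hDY : IsUnit (D₁ * Y).det := by rw [det_mul]; exact hD₁u.mul hY
  have hDYD : IsUnit (D₁ * Y * D₂).det := by rw [det_mul]; exact hDY.mul hD₂u
  have htransport : IsNullMinimizer (D₁ * Y * D₂) (D₁ * Dr * D₁ᵀ) (D₂ * Dc * D₂ᵀ) := by
    simpa only [hD₂.isSymm.eq] using h.mul_mul_transpose hD₁ hD₂ hD₁u hD₂u
  rw [h'.log_det_kronecker_eq htransport,
    log_det_kronecker_mul_mul_transpose hD₁u hD₂u h.1.isUnit_det h.2.1.isUnit_det,
    log_det_smul_mul_transpose_self hm' hDYD, log_det_smul_mul_transpose_self hm' hY,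
    log_det_mul hDY hD₂u, log_det_mul hD₁u hY, Fintype.card_fin]
  ring

/-- The likelihood ratio test statistic
`T(Y) = log det (D̂_c ⊗ D̂_r) − m·log det(Y Yᵗ/m)` is invariant under left and right
multiplication of the data by positive diagonal matrices: `T(D₁ Y D₂) = T(Y)`. -/
theorem lrt_statistic_diagonal_invariant
    (m : ℕ) (hm : 0 < m) (Y D₁ D₂ Dr Dc Dr' Dc' : Matrix (Fin m) (Fin m) ℝ)
    (hY : IsUnit Y.det) (hD₁ : IsPosDiag D₁) (hD₂ : IsPosDiag D₂)
    (h : IsNullMinimizer Y Dr Dc)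
    (h' : IsNullMinimizer (D₁ * Y * D₂) Dr' Dc') :
    Real.log (Matrix.kroneckerMap (· * ·) Dc' Dr').det
        - m * Real.log (((m : ℝ)⁻¹ • ((D₁ * Y * D₂) * (D₁ * Y * D₂)ᵀ)).det)
      = Real.log (Matrix.kroneckerMap (· * ·) Dc Dr).det
        - m * Real.log (((m : ℝ)⁻¹ • (Y * Yᵀ)).det) :=
  lrt_statistic_diagonal_invariant_general hm hY hD₁.1 hD₂.1 hD₁.isUnit_det hD₂.isUnit_det h h'
end

section
/- Let m and p be positive integers, let Y₁, …, Y_p be invertible m×m real matrices, and let Σr and Σc be symmetric positive definite m×m real matrices. Then Σ_{i=1}^p tr(Σr⁻¹ Y_i Σc⁻¹ Y_iᵗ) + p·(m·log det Σr + m·log det Σc) ≥ Σ_{i=1}^p (m² + m·log det(Y_i Y_iᵗ / m)); that is, the scaled log-likelihood for p independent homoscedastic matrix normal observations is bounded below. -/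
open Matrix

/-!
The trace of a positive definite `M` dominates `log det M + n`, because each eigenvalue satisfies
`log x ≤ x - 1`. Factoring `A = Bᴴ * B` and taking `M = B * C * Bᴴ` turns this into
`log det A + log det C + n ≤ tr (A * C)` for positive definite `A` and `C`. With `A = Σr⁻¹` and
`C = t⁻¹ • (Y * Σc⁻¹ * Yᴴ)`, multiplication by `t` gives the bound for one observation with weight
`t` on the log-determinants; the likelihood has weight `t = m`.

Over `ℝ` or `ℂ`, the log-determinant is written `Real.log ‖M.det‖`: a positive definite matrix has
`‖M.det‖ = M.det`, and the norm is multiplicative and real-valued.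
-/

section NormedField

variable {K n : Type*} [NormedField K] [Fintype n] [DecidableEq n]

lemma log_norm_det_mul {A C : Matrix n n K} (hA : IsUnit A) (hC : IsUnit C) :
    Real.log ‖(A * C).det‖ = Real.log ‖A.det‖ + Real.log ‖C.det‖ := by
  rw [isUnit_iff_isUnit_det] at hA hC
  rw [det_mul, norm_mul, Real.log_mul (norm_ne_zero_iff.mpr hA.ne_zero)
    (norm_ne_zero_iff.mpr hC.ne_zero)]

lemma log_norm_det_inv (A : Matrix n n K) :
    Real.log ‖A⁻¹.det‖ = -Real.log ‖A.det‖ := by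
  rw [det_nonsing_inv, Ring.inverse_eq_inv', norm_inv, Real.log_inv]

end NormedField

section RCLike

open scoped ComplexOrder

variable {𝕜 n : Type*} [RCLike 𝕜] [Fintype n] [DecidableEq n] {A C Sr Sc Y : Matrix n n 𝕜} {t : ℝ}

lemma log_norm_det_add_card_le_re_trace (hA : A.PosDef) :
    Real.log ‖A.det‖ + Fintype.card n ≤ RCLike.re A.trace := by
  have hdet : Real.log ‖A.det‖ = ∑ i, Real.log (hA.1.eigenvalues i) := by
    rw [hA.1.det_eq_prod_eigenvalues, norm_prod, Real.log_prod fun i _ ↦ by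
      simpa using (hA.eigenvalues_pos i).ne']
    simp only [RCLike.norm_ofReal, Real.log_abs]
  have htrace : RCLike.re A.trace = ∑ i, hA.1.eigenvalues i := by
    simp [hA.1.trace_eq_sum_eigenvalues]
  calc Real.log ‖A.det‖ + Fintype.card n
      = ∑ i, (Real.log (hA.1.eigenvalues i) + 1) := by
        simp [hdet, Finset.sum_add_distrib]
    _ ≤ ∑ i, hA.1.eigenvalues i := Finset.sum_le_sum fun i _ ↦
        le_sub_iff_add_le.mp (Real.log_le_sub_one_of_pos (hA.eigenvalues_pos i))
    _ = RCLike.re A.trace := htrace.symm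

open scoped MatrixOrder in
lemma log_norm_det_add_log_norm_det_add_card_le_re_trace_mul (hA : A.PosDef) (hC : C.PosDef) :
    Real.log ‖A.det‖ + Real.log ‖C.det‖ + Fintype.card n ≤ RCLike.re (A * C).trace := by
  obtain ⟨B, hB, hAB⟩ :=
    CStarAlgebra.isStrictlyPositive_iff_eq_star_mul_self.mp hA.isStrictlyPositive
  have hdet : (B * C * star B).det = (A * C).det := by
    rw [hAB, det_mul_comm, Matrix.mul_assoc]
  have htrace : (B * C * star B).trace = (A * C).trace := by
    rw [hAB, Matrix.trace_mul_comm, Matrix.mul_assoc]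
  have hBC : (B * C * star B).PosDef := hB.posDef_star_right_conjugate_iff.mpr hC
  rw [← log_norm_det_mul hA.isUnit hC.isUnit, ← hdet, ← htrace]
  exact log_norm_det_add_card_le_re_trace hBC

lemma matrixNormal_scaledLogLik_lower_bound (ht : 0 < t) (hY : IsUnit Y.det)
    (hSr : Sr.PosDef) (hSc : Sc.PosDef) :
    t * Fintype.card n + t * Real.log ‖(t⁻¹ • (Y * Yᴴ)).det‖ ≤
      RCLike.re (Sr⁻¹ * Y * Sc⁻¹ * Yᴴ).trace
        + (t * Real.log ‖Sr.det‖ + t * Real.log ‖Sc.det‖) := by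
  have hYu : IsUnit Y := (isUnit_iff_isUnit_det Y).mpr hY
  have hC : (t⁻¹ • (Y * Sc⁻¹ * Yᴴ)).PosDef :=
    (hYu.posDef_star_right_conjugate_iff.mpr hSc.inv).smul (inv_pos.mpr ht)
  have hG : (t⁻¹ • (Y * Yᴴ)).PosDef :=
    (PosDef.mul_conjTranspose_self Y (vecMul_injective_of_isUnit hYu)).smul (inv_pos.mpr ht)
  have hdet : (t⁻¹ • (Y * Sc⁻¹ * Yᴴ)).det = (t⁻¹ • (Y * Yᴴ) * Sc⁻¹).det := by
    rw [smul_mul, det_smul_of_tower, det_smul_of_tower, Matrix.mul_assoc, Matrix.mul_assoc,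
      det_mul Y, det_mul Y, det_mul_comm]
  have htrace : RCLike.re (Sr⁻¹ * t⁻¹ • (Y * Sc⁻¹ * Yᴴ)).trace =
      t⁻¹ * RCLike.re (Sr⁻¹ * Y * Sc⁻¹ * Yᴴ).trace := by
    rw [Matrix.mul_smul, trace_smul, RCLike.smul_re]
    simp only [Matrix.mul_assoc]
  have hbound := log_norm_det_add_log_norm_det_add_card_le_re_trace_mul hSr.inv hC
  rw [hdet, log_norm_det_mul hG.isUnit hSc.inv.isUnit, log_norm_det_inv, log_norm_det_inv, htrace,
    ← mul_le_mul_iff_right₀ ht, mul_inv_cancel_left₀ ht.ne'] at hbound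
  linarith

theorem matrixNormal_iid_scaledLogLik_lower_bound_general {ι : Type*} [Fintype ι] (ht : 0 < t)
    {Y : ι → Matrix n n 𝕜} (hY : ∀ i, IsUnit (Y i).det)
    (hSr : Sr.PosDef) (hSc : Sc.PosDef) :
    ∑ i, RCLike.re (Sr⁻¹ * Y i * Sc⁻¹ * (Y i)ᴴ).trace
        + Fintype.card ι * (t * Real.log ‖Sr.det‖ + t * Real.log ‖Sc.det‖)
      ≥ ∑ i, (t * Fintype.card n + t * Real.log ‖(t⁻¹ • (Y i * (Y i)ᴴ)).det‖) := by
  rw [← nsmul_eq_mul, ← Finset.card_univ, ← Finset.sum_const, ← Finset.sum_add_distrib]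
  exact Finset.sum_le_sum fun i _ ↦ matrixNormal_scaledLogLik_lower_bound ht (hY i) hSr hSc

end RCLike

/-- For positive integers `m`, `p`, invertible `m × m` real matrices
`Y₁, …, Y_p`, and symmetric positive definite `Σr`, `Σc`, the scaled log-likelihood of `p`
i.i.d. mean-zero matrix normal observations is bounded below:
`Σᵢ tr(Σr⁻¹ Yᵢ Σc⁻¹ Yᵢᵗ) + p(m·log det Σr + m·log det Σc) ≥ Σᵢ (m² + m·log det(Yᵢ Yᵢᵗ/m))`. -/
theorem matrixNormal_iid_scaledLogLik_lower_bound
    (m p : ℕ) (hm : 0 < m) (hp : 0 < p)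
    (Y : Fin p → Matrix (Fin m) (Fin m) ℝ) (hY : ∀ i, IsUnit (Y i).det)
    (Sr Sc : Matrix (Fin m) (Fin m) ℝ) (hSr : Sr.PosDef) (hSc : Sc.PosDef) :
    ∑ i, (Sr⁻¹ * Y i * Sc⁻¹ * (Y i)ᵀ).trace
        + p * (m * Real.log Sr.det + m * Real.log Sc.det)
      ≥ ∑ i, ((m : ℝ) ^ 2 + m * Real.log (((m : ℝ)⁻¹ • (Y i * (Y i)ᵀ)).det)) := by
  simpa [sq] using matrixNormal_iid_scaledLogLik_lower_bound_general
    (Nat.cast_pos.mpr hm : (0 : ℝ) < m) hY hSr hSc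
end
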